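/- Let q be an odd positive integer and k, m integers with gcd(k,q) = 1. Then S(q;k,m) = e(−\overline{4k}·m²/q)·(k/q)·S(q;1,0), where \overline{4k} is the inverse of 4k modulo q and (k/q) is the Jacobi symbol. -/

import Mathlib

noncomputable def e (t : ℝ) : ℂ := Complex.exp (2 * Real.pi * Complex.I * t)

noncomputable def gaussS (q : ℕ) (k m : ℤ) : ℂ :=
  ∑ α ∈ Finset.range q, e (((k * (α : ℤ)^2 + m * (α : ℤ) : ℤ) : ℝ) / q)

/-!
Completing the square removes the linear term. For `m = 0`, write `q = r² s` with `s` squarefree and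
average the sum over the translations by multiples of `r s`. Since `(r s)² = 0` modulo `q`, each
translation only multiplies the terms by a linear character, and orthogonality leaves exactly the
multiples of `r`; hence `S(q; k, 0) = r · S(s; k, 0)`, up to the choice of primitive character. As
`(k/q) = (k/s)`, it remains to treat squarefree `s`, which the Chinese remainder theorem splits into
primes; at a prime, `S(p; k, 0)` is the Gauss sum of the quadratic character.
-/

open Finset

lemma isPrimitive_compAddMonoidHom {R S R' : Type*} [CommRing R] [CommRing S] [CommMonoid R']
    {f : R →+ S} (hf : Function.Injective f)
    (hmul : ∀ s, ∃ r, ∀ a, f a * s = f (a * r)) {ψ : AddChar S R'} (hψ : ψ.IsPrimitive) :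
    (ψ.compAddMonoidHom f).IsPrimitive := by
  refine fun a ha h ↦ hψ ((map_ne_zero_iff f hf).mpr ha) ?_
  ext s
  obtain ⟨r, hr⟩ := hmul s
  rw [AddChar.mulShift_apply, hr]
  exact DFunLike.congr_fun h r

section FiniteRing

variable {R S T R' : Type*} [CommRing R] [Fintype R] [CommRing S] [Fintype S]
  [CommRing T] [Fintype T] [CommRing R']

/-- The quadratic Gauss sum of an additive character `ψ` with leading coefficient `a`; for the
standard character of `ZMod q` this is the sum `S(q; a, 0)`. -/
def quadGaussSum (ψ : AddChar R R') (a : R) : R' := ∑ x, ψ (a * x ^ 2)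

lemma sum_addChar_quadratic_eq (ψ : AddChar R R') {a b : R} (h : 4 * a * b = 1) (m : R) :
    ∑ x, ψ (a * x ^ 2 + m * x) = ψ (-b * m ^ 2) * quadGaussSum ψ a := by
  rw [quadGaussSum, mul_sum]
  refine Fintype.sum_equiv (Equiv.addRight (2 * b * m)) _ _ fun x ↦ ?_
  rw [← AddChar.map_add_eq_mul, Equiv.coe_addRight]
  congr 1
  linear_combination (-m * x - b * m ^ 2) * h

lemma quadGaussSum_ringEquiv_prod (f : R × S ≃+* T) (ψ : AddChar T R') (a : R) (b : S) :
    quadGaussSum ψ (f (a, b)) =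
      quadGaussSum (ψ.compAddMonoidHom ((f : R × S →+ T).comp (.inl R S))) a *
        quadGaussSum (ψ.compAddMonoidHom ((f : R × S →+ T).comp (.inr R S))) b := by
  simp only [quadGaussSum]
  rw [Fintype.sum_mul_sum, ← Fintype.sum_prod_type', ← f.toEquiv.sum_comp]
  refine sum_congr rfl fun x _ ↦ ?_
  simp [← AddChar.map_add_eq_mul, ← map_add, ← map_pow, ← map_mul, Prod.mul_def, Prod.pow_def]

lemma quadGaussSum_eq_sum_filter_mul_eq_zero [IsDomain R'] [DecidableEq R]
    (hR : (Fintype.card R : R') ≠ 0) {ψ : AddChar R R'} (hψ : ψ.IsPrimitive) {a c : R}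
    (ha : IsUnit (2 * a)) (hc : c ^ 2 = 0) :
    quadGaussSum ψ a = ∑ x with c * x = 0, ψ (a * x ^ 2) := by
  have translate (z : R) :
      quadGaussSum ψ a = ∑ x, ψ (a * x ^ 2) * ψ (z * (2 * a * (c * x))) := by
    refine (Fintype.sum_equiv (Equiv.addRight (c * z)) _ _ fun x ↦ ?_).symm
    rw [← AddChar.map_add_eq_mul, Equiv.coe_addRight]
    congr 1
    linear_combination -(a * z ^ 2) * hc
  have orthogonality (x : R) : ∑ z, ψ (z * (2 * a * (c * x))) =
      if c * x = 0 then (Fintype.card R : R') else 0 := by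
    simpa only [ha.mul_right_eq_zero, Nat.cast_ite, Nat.cast_zero]
      using AddChar.sum_mulShift (2 * a * (c * x)) hψ
  refine mul_left_cancel₀ hR ?_
  calc (Fintype.card R : R') * quadGaussSum ψ a
      = ∑ z, ∑ x, ψ (a * x ^ 2) * ψ (z * (2 * a * (c * x))) := by
        simp only [← translate, sum_const, card_univ, nsmul_eq_mul]
    _ = ∑ x, ψ (a * x ^ 2) * if c * x = 0 then (Fintype.card R : R') else 0 := by
        rw [sum_comm]
        simp only [← mul_sum, orthogonality]
    _ = Fintype.card R * ∑ x with c * x = 0, ψ (a * x ^ 2) := by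
        simp only [mul_ite, mul_zero, ← sum_filter, ← sum_mul, mul_comm (Fintype.card R : R')]

end FiniteRing

section FiniteField

variable {F R' : Type*} [Field F] [Fintype F] [DecidableEq F] [CommRing R'] [IsDomain R']

lemma quadGaussSum_eq_gaussSum (hF : ringChar F ≠ 2) {ψ : AddChar F R'} (hψ : ψ.IsPrimitive)
    {a : F} (ha : a ≠ 0) :
    quadGaussSum ψ a =
      gaussSum ((quadraticChar F).ringHomComp (Int.castRingHom R')) (ψ.mulShift a) := by
  have card_sqrts (y : F) : (#{x : F | x ^ 2 = y} : R') = (quadraticChar F y : R') + 1 := by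
    have h := quadraticChar_card_sqrts hF y
    simp only [Set.toFinset_ofPred] at h
    exact_mod_cast congrArg (Int.cast (R := R')) h
  calc quadGaussSum ψ a = ∑ y, ∑ x with x ^ 2 = y, ψ (a * x ^ 2) :=
        (sum_fiberwise univ (· ^ 2) _).symm
    _ = ∑ y, ((quadraticChar F y : R') + 1) * ψ.mulShift a y := by
        refine sum_congr rfl fun y _ ↦ ?_
        rw [← card_sqrts, ← nsmul_eq_mul, ← sum_const]
        refine sum_congr rfl fun x hx ↦ ?_
        rw [(mem_filter.mp hx).2, AddChar.mulShift_apply]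
    _ = _ := by
        simp only [add_mul, one_mul, sum_add_distrib,
          AddChar.sum_eq_zero_of_ne_one (hψ ha), add_zero]
        rfl

lemma quadGaussSum_eq_quadraticChar_mul (hF : ringChar F ≠ 2) {ψ : AddChar F R'}
    (hψ : ψ.IsPrimitive) {a : F} (ha : a ≠ 0) :
    quadGaussSum ψ a = quadraticChar F a * quadGaussSum ψ 1 := by
  set χ := (quadraticChar F).ringHomComp (Int.castRingHom R')
  have hχ : (quadraticChar F a : R') * quadraticChar F a = 1 := by
    exact_mod_cast congrArg (Int.cast (R := R')) ((sq _).symm.trans (quadraticChar_sq_one ha))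
  have shift : (quadraticChar F a : R') * gaussSum χ (ψ.mulShift a) = gaussSum χ ψ :=
    gaussSum_mulShift χ ψ (Units.mk0 a ha)
  rw [quadGaussSum_eq_gaussSum hF hψ ha, quadGaussSum_eq_gaussSum hF hψ one_ne_zero,
    AddChar.mulShift_one, ← shift, ← mul_assoc, hχ, one_mul]

end FiniteField

section ZMod

lemma sum_range_mul_natCast_zmod {M : Type*} [AddCommMonoid M] {q : ℕ} [NeZero q] (r : ℕ)
    (F : ZMod q → M) : ∑ j ∈ range (r * q), F j = r • ∑ x, F x := by
  have one_period : ∑ j ∈ range q, F j = ∑ x, F x :=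
    sum_bij' (fun j _ ↦ (j : ZMod q)) (fun x _ ↦ x.val) (by simp) (by simp [ZMod.val_lt])
      (fun j hj ↦ ZMod.val_cast_of_lt (mem_range.mp hj)) (by simp) (by simp)
  induction r with
  | zero => simp
  | succ r ih => simp [add_mul, sum_range_add, ih, one_period, add_smul]

lemma sum_filter_natCast_mul_eq_zero {M : Type*} [AddCommMonoid M] {q d n : ℕ} [NeZero q]
    (hq : d * n = q) (F : ZMod q → M) :
    ∑ x with (n : ZMod q) * x = 0, F x = ∑ j ∈ range n, F (d * j : ℕ) := by
  subst hq
  have hn : 0 < n := Nat.pos_of_mul_pos_left (NeZero.pos (d * n))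
  have hd : 0 < d := Nat.pos_of_mul_pos_right (NeZero.pos (d * n))
  symm
  refine sum_bij (fun j _ ↦ ((d * j : ℕ) : ZMod (d * n))) ?_ ?_ ?_ (fun _ _ ↦ rfl)
  · intro j _
    rw [mem_filter_univ, ← Nat.cast_mul, ZMod.natCast_eq_zero_iff]
    exact ⟨j, by ring⟩
  · intro i hi j hj hij
    have lt {j : ℕ} (hj : j ∈ range n) : d * j < d * n := by gcongr; exact mem_range.mp hj
    exact Nat.eq_of_mul_eq_mul_left hd <| Nat.ModEq.eq_of_lt_of_lt
      ((ZMod.natCast_eq_natCast_iff ..).mp hij) (lt hi) (lt hj)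
  · intro x hx
    obtain ⟨x, hxlt, rfl⟩ : ∃ j < d * n, (j : ZMod (d * n)) = x := ⟨x.val, x.val_lt, by simp⟩
    rw [mem_filter_univ, ← Nat.cast_mul, ZMod.natCast_eq_zero_iff, mul_comm d] at hx
    obtain ⟨j, rfl⟩ := Nat.dvd_of_mul_dvd_mul_left hn hx
    exact ⟨j, mem_range.mpr (Nat.lt_of_mul_lt_mul_left hxlt), rfl⟩

variable {R' : Type*} [CommRing R']

lemma exists_isPrimitive_eq_mulShift {c s : ℕ} [NeZero c] [NeZero s]
    {ψ : AddChar (ZMod (c * s)) R'} (hψ : ψ.IsPrimitive) :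
    ∃ φ : AddChar (ZMod s) R', φ.IsPrimitive ∧ ∀ j : ℤ, φ j = ψ.mulShift c j := by
  let scale : ZMod s →+ ZMod (c * s) :=
    ZMod.lift s ⟨(AddMonoidHom.mulLeft (c : ZMod (c * s))).comp (Int.castAddHom _), by
      simp [← Nat.cast_mul]⟩
  have scale_intCast (j : ℤ) : scale j = c * j := ZMod.lift_coe ..
  refine ⟨ψ.compAddMonoidHom scale, ?_, fun j ↦ by simp [scale_intCast]⟩
  refine AddChar.zmod_char_primitive_of_eq_one_only_at_zero _ _ fun y hy ↦ ?_
  obtain ⟨j, rfl⟩ := ZMod.intCast_surjective y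
  rw [AddChar.compAddMonoidHom_apply, scale_intCast, hψ.zmod_char_eq_one_iff] at hy
  rw [ZMod.intCast_zmod_eq_zero_iff_dvd]
  have : ((c * s : ℕ) : ℤ) ∣ c * j := by
    rw [← ZMod.intCast_zmod_eq_zero_iff_dvd]; exact_mod_cast hy
  push_cast at this
  exact Int.dvd_of_mul_dvd_mul_left (by exact_mod_cast NeZero.ne c) this

variable [IsDomain R']

lemma natCast_ne_zero_of_isPrimitive {q : ℕ} [NeZero q] {ψ : AddChar (ZMod q) R'}
    (hψ : ψ.IsPrimitive) : (q : R') ≠ 0 := by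
  have pow_eq (l : ℕ) : ψ 1 ^ l = ψ l := by rw [← AddChar.map_nsmul_eq_pow, nsmul_one]
  have root : IsPrimitiveRoot (ψ 1) q :=
    { pow_eq_one := by simp [pow_eq]
      dvd_of_pow_eq_one := fun l hl ↦ by
        rwa [pow_eq, hψ.zmod_char_eq_one_iff, ZMod.natCast_eq_zero_iff] at hl }
  exact root.neZero'.out

lemma quadGaussSum_zmod_sq_mul {r s : ℕ} [NeZero r] [NeZero s]
    {ψ : AddChar (ZMod (r ^ 2 * s)) R'} (hψ : ψ.IsPrimitive) {φ : AddChar (ZMod s) R'}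
    (hφ : ∀ j : ℤ, φ j = ψ.mulShift (r ^ 2 : ℕ) j) {k : ℤ}
    (hk : IsUnit (2 * k : ZMod (r ^ 2 * s))) :
    quadGaussSum ψ k = r * quadGaussSum φ k := by
  have hsq : ((r * s : ℕ) : ZMod (r ^ 2 * s)) ^ 2 = 0 := by
    rw [← Nat.cast_pow, ZMod.natCast_eq_zero_iff]
    exact ⟨s, by ring⟩
  calc quadGaussSum ψ k
      = ∑ x with ((r * s : ℕ) : ZMod (r ^ 2 * s)) * x = 0, ψ (k * x ^ 2) :=
        quadGaussSum_eq_sum_filter_mul_eq_zero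
          (by rw [ZMod.card]; exact natCast_ne_zero_of_isPrimitive hψ) hψ hk hsq
    _ = ∑ j ∈ range (r * s), ψ (k * (r * j : ℕ) ^ 2) :=
        sum_filter_natCast_mul_eq_zero (by ring) _
    _ = ∑ j ∈ range (r * s), φ (k * j ^ 2) := by
        refine sum_congr rfl fun j _ ↦ ?_
        have := hφ (k * j ^ 2)
        rw [AddChar.mulShift_apply] at this
        push_cast at this ⊢
        rw [this]
        ring_nf
    _ = r * quadGaussSum φ k := by
        rw [sum_range_mul_natCast_zmod r fun x : ZMod s ↦ φ (k * x ^ 2), nsmul_eq_mul, quadGaussSum]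

end ZMod

section Jacobi

/-- The law `S(q; k, 0) = (k/q) S(q; 1, 0)`, required of every primitive character of `ZMod q` with
values in `R'`; quantifying over all of them makes the law stable under the Chinese remainder
theorem, which changes the character. -/
def JacobiTwistLaw (R' : Type*) [CommRing R'] (q : ℕ) : Prop :=
  ∀ (_ : NeZero q) (ψ : AddChar (ZMod q) R'), ψ.IsPrimitive → ∀ k : ℤ, IsCoprime k q →
    quadGaussSum ψ k = jacobiSym k q * quadGaussSum ψ 1

lemma isCoprime_two_mul_left {q : ℕ} (hodd : Odd q) {k : ℤ} (hk : IsCoprime k q) :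
    IsCoprime (2 * k) (q : ℤ) :=
  .mul_left (by exact_mod_cast (Nat.coprime_two_left.mpr hodd).isCoprime) hk

variable {R' : Type*} [CommRing R']

lemma JacobiTwistLaw.one : JacobiTwistLaw R' 1 := fun _ ψ _ k _ ↦ by
  rw [Subsingleton.elim (k : ZMod 1) 1, jacobiSym.one_right, Int.cast_one, one_mul]

lemma JacobiTwistLaw.mul {m n : ℕ} [NeZero m] [NeZero n] (hmn : m.Coprime n)
    (hm : JacobiTwistLaw R' m) (hn : JacobiTwistLaw R' n) : JacobiTwistLaw R' (m * n) := by
  intro _ ψ hψ k hk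
  rw [Nat.cast_mul] at hk
  let crt : ZMod m × ZMod n ≃+* ZMod (m * n) := (ZMod.chineseRemainder hmn).symm
  have hcrt_inl := isPrimitive_compAddMonoidHom
    (f := (crt : ZMod m × ZMod n →+ ZMod (m * n)).comp (.inl _ _))
    (fun x y h ↦ by simpa using h)
    (crt.surjective.forall.mpr fun t ↦ ⟨t.1, fun a ↦ by simp [← map_mul, Prod.mul_def]⟩) hψ
  have hcrt_inr := isPrimitive_compAddMonoidHom
    (f := (crt : ZMod m × ZMod n →+ ZMod (m * n)).comp (.inr _ _))
    (fun x y h ↦ by simpa using h)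
    (crt.surjective.forall.mpr fun t ↦ ⟨t.2, fun a ↦ by simp [← map_mul, Prod.mul_def]⟩) hψ
  have split (j : ℤ) := quadGaussSum_ringEquiv_prod crt ψ (j : ZMod m) (j : ZMod n)
  have crt_intCast (j : ℤ) : crt (j, j) = j := map_intCast crt j
  simp only [crt_intCast] at split
  rw [← Int.cast_one, split, split, hm inferInstance _ hcrt_inl k hk.of_mul_right_left,
    hn inferInstance _ hcrt_inr k hk.of_mul_right_right, jacobiSym.mul_right]
  push_cast
  ring

variable [IsDomain R']

lemma JacobiTwistLaw.prime {p : ℕ} [Fact p.Prime] (hp : p ≠ 2) : JacobiTwistLaw R' p := by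
  intro _ ψ hψ k hk
  have hk0 : (k : ZMod p) ≠ 0 :=
    ((ZMod.coe_int_isUnit_iff_isCoprime k p).mpr hk.symm).ne_zero
  rw [quadGaussSum_eq_quadraticChar_mul (by rwa [ZMod.ringChar_zmod_n]) hψ hk0,
    ← jacobiSym.legendreSym.to_jacobiSym, legendreSym]

lemma JacobiTwistLaw.of_squarefree {s : ℕ} (hs : Squarefree s) (hodd : Odd s) :
    JacobiTwistLaw R' s := by
  induction s using induction_on_primes with
  | zero => exact absurd hs not_squarefree_zero
  | one => exact .one
  | prime_mul p n hp ih =>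
    obtain ⟨hpn, -, hn⟩ := Nat.squarefree_mul_iff.mp hs
    obtain ⟨hpodd, hnodd⟩ := Nat.odd_mul.mp hodd
    have : Fact p.Prime := ⟨hp⟩
    have : NeZero n := ⟨hn.ne_zero⟩
    have hp2 : p ≠ 2 := by rintro rfl; exact absurd hpodd (by decide)
    exact .mul hpn (.prime hp2) (ih hn hnodd)

lemma JacobiTwistLaw.sq_mul {r s : ℕ} [NeZero r] [NeZero s] (hodd : Odd (r ^ 2 * s))
    (hs : JacobiTwistLaw R' s) : JacobiTwistLaw R' (r ^ 2 * s) := by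
  intro _ ψ hψ k hk
  obtain ⟨φ, hφ, hφψ⟩ := exists_isPrimitive_eq_mulShift hψ
  have reduce {j : ℤ} (hj : IsCoprime j (r ^ 2 * s : ℕ)) :
      quadGaussSum ψ j = r * quadGaussSum φ j :=
    quadGaussSum_zmod_sq_mul hψ hφψ <| by
      exact_mod_cast
        (ZMod.coe_int_isUnit_iff_isCoprime ..).mpr (isCoprime_two_mul_left hodd hj).symm
  have hk' : IsCoprime k ((r : ℤ) ^ 2 * s) := by exact_mod_cast hk
  have hkr : k.gcd r = 1 :=
    Int.isCoprime_iff_gcd_eq_one.mp ((IsCoprime.pow_right_iff two_pos).mp hk'.of_mul_right_left)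
  have jacobi : jacobiSym k (r ^ 2 * s) = jacobiSym k s := by
    rw [jacobiSym.mul_right, jacobiSym.pow_right, jacobiSym.sq_one hkr, one_mul]
  have reduce_one := reduce isCoprime_one_left
  rw [Int.cast_one, Int.cast_one] at reduce_one
  rw [reduce hk, hs inferInstance φ hφ k hk'.of_mul_right_right, reduce_one, jacobi]
  ring

lemma JacobiTwistLaw.of_odd {q : ℕ} (hodd : Odd q) : JacobiTwistLaw R' q := by
  obtain ⟨s, r, rfl, hs⟩ := Nat.sq_mul_squarefree q
  obtain ⟨hr, hsodd⟩ := Nat.odd_mul.mp hodd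
  have : NeZero s := ⟨hs.ne_zero⟩
  have : NeZero r := ⟨(Nat.odd_pow_iff two_ne_zero |>.mp hr).pos.ne'⟩
  exact .sq_mul hodd (.of_squarefree hs hsodd)

theorem gaussS_odd_eval_general {q : ℕ} [NeZero q] (hodd : Odd q) {ψ : AddChar (ZMod q) R'}
    (hψ : ψ.IsPrimitive) {k : ℤ} (hk : IsCoprime k q) (m : ZMod q) :
    ∑ x, ψ (k * x ^ 2 + m * x) =
      ψ (-(4 * k : ZMod q)⁻¹ * m ^ 2) * jacobiSym k q * ∑ x, ψ (x ^ 2) := by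
  have hunit : IsUnit (4 * k : ZMod q) := by
    have := (ZMod.coe_int_isUnit_iff_isCoprime ..).mpr
      (isCoprime_two_mul_left hodd (isCoprime_two_mul_left hodd hk)).symm
    rw [← mul_assoc] at this
    exact_mod_cast this
  rw [sum_addChar_quadratic_eq ψ (ZMod.mul_inv_of_unit _ hunit),
    JacobiTwistLaw.of_odd hodd inferInstance ψ hψ k hk, mul_assoc]
  simp only [quadGaussSum, one_mul]

end Jacobi

lemma e_intCast_div (q : ℕ) [NeZero q] (n : ℤ) : e (n / q) = ZMod.stdAddChar (n : ZMod q) := by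
  rw [e, ZMod.stdAddChar_coe]
  push_cast
  ring_nf

lemma gaussS_eq_sum_stdAddChar (q : ℕ) [NeZero q] (k m : ℤ) :
    gaussS q k m = ∑ x : ZMod q, ZMod.stdAddChar (N := q) (k * x ^ 2 + m * x) := by
  have one_period := sum_range_mul_natCast_zmod 1
    fun x : ZMod q ↦ ZMod.stdAddChar (N := q) (k * x ^ 2 + m * x)
  rw [one_mul, one_nsmul] at one_period
  rw [← one_period, gaussS]
  refine sum_congr rfl fun α _ ↦ ?_
  rw [e_intCast_div]
  push_cast
  rfl

theorem gaussS_odd_eval (q : ℕ) (hq : 0 < q) (hodd : Odd q) (k m : ℤ)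
    (hk : Int.gcd k q = 1) (b : ℤ) (hb : (4 * k * b) % q = 1 % q) :
    gaussS q k m = e (((-b * m^2 : ℤ) : ℝ) / q) * (jacobiSym k q : ℂ) * gaussS q 1 0 := by
  have : NeZero q := ⟨hq.ne'⟩
  have hinv : (4 * k : ZMod q)⁻¹ = b := ZMod.inv_eq_of_mul_eq_one q _ _ <| by
    exact_mod_cast (ZMod.intCast_eq_intCast_iff' (4 * k * b) 1 q).mpr hb
  rw [gaussS_eq_sum_stdAddChar, gaussS_eq_sum_stdAddChar, e_intCast_div]
  simpa [hinv] using
    gaussS_odd_eval_general hodd (ZMod.isPrimitive_stdAddChar q)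
      (Int.isCoprime_iff_gcd_eq_one.mpr hk) m
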